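/- Let p be a prime and P a non-abelian finite p-group. Then P is a GC*-group if and only if Z(P) is cyclic and |P'| = p. -/

import Mathlib

noncomputable section

/-- `χ : G → ℂ` is the character of some irreducible complex representation of `G`. -/
def IsIrrChar {G : Type*} [Group G] (χ : G → ℂ) : Prop :=
  ∃ (n : ℕ) (ρ : Representation ℂ G (Fin n → ℂ)),
    0 < n ∧
    (∀ U : Submodule ℂ (Fin n → ℂ), (∀ g : G, U.map (ρ g) ≤ U) → U = ⊥ ∨ U = ⊤) ∧
    (∀ g : G, χ g = LinearMap.trace ℂ (Fin n → ℂ) (ρ g))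

/-- Two complex characters are Galois conjugate: some field automorphism (which, on the
cyclotomic field generated by the character values, restricts to a Galois automorphism
over `ℚ`) carries the values of `χ` to those of `ψ`. -/
def GaloisConj {G : Type*} [Group G] (χ ψ : G → ℂ) : Prop :=
  ∃ σ : ℂ ≃+* ℂ, ∀ g : G, ψ g = σ (χ g)

/-- `G` is a `GC*`-group: any two non-linear irreducible complex characters of the same
degree are Galois conjugate. -/
def IsGCStar (G : Type*) [Group G] : Prop :=
  ∀ χ ψ : G → ℂ, IsIrrChar χ → IsIrrChar ψ → χ 1 ≠ 1 → ψ 1 ≠ 1 →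
    χ 1 = ψ 1 → GaloisConj χ ψ

/-!
Let `P` be a finite `p`-group, and let `Z(ρ)` denote the center of `P` modulo the kernel of `ρ`.

If `Z(P)` is cyclic and `|P'| = p`, then `P'` is the only subgroup of order `p` in `Z(P)`, so every
non-linear irreducible `ρ` is faithful. Its character vanishes off `Z(P) = ⟨z⟩`, and on `Z(P)` it is
determined by the degree and by the scalar `ρ z`, a primitive root of unity of order `|Z(P)|`. Any
two such roots of unity are exchanged by a field automorphism.

Conversely, let `P` be a `GC*`-group. Non-linear irreducible representations of the same degree have
the same kernel on `Z(P)`, and comparing `ρ` with its twists by linear characters shows that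
`ker ρ ≤ P'`. Choose `z ∈ P' ∩ Z(P)` of order `p`. Some non-linear irreducible representation is
non-trivial at `z`, and if `P' ≠ ⟨z⟩` another one is trivial at `z`; hence `|P'| = p` as soon as
all non-linear irreducible representations have the same degree. By induction, applied to `P / ⟨z⟩`,
it suffices to show that they do when `|P'| = p ^ 2`:
* If `P' ≤ Z(P)`, then `(deg ρ) ^ 2 = |P : Z(ρ)|`, and `|Z(ρ) : Z(P)|` is `1` or `p`. The parity of
  the exponent of `p` in `|P : Z(P)|` then determines the degree.
* Otherwise there is a non-linear irreducible `τ` with kernel `P' ∩ Z(P)`, and the centralizer of a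
  generator of `Z(τ)` modulo `ker τ` is an abelian subgroup of index `p`, so all degrees are `p`.

Once `|P'| = p`, any non-linear irreducible representation is faithful, so `Z(P)` is cyclic.
-/

open Module Representation
open scoped commutatorElement

/-! ### Automorphisms of algebraically closed fields -/

section Automorphisms

theorem exists_ringEquiv_extends {K L : Type*} [Field K] [Field L] [Algebra K L] [IsAlgClosed L]
    (τ : K ≃+* K) : ∃ σ : L ≃+* L, ∀ x : K, σ (algebraMap K L x) = algebraMap K L (τ x) := by
  obtain ⟨s, hs⟩ := exists_isTranscendenceBasis K L
  have := IsAlgClosed.isAlgClosure_of_transcendence_basis _ hs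
  let f := hs.1.aevalEquiv
  let e := (f.symm.toRingEquiv.trans (MvPolynomial.mapEquiv s τ)).trans f.toRingEquiv
  have he (x : K) : e (algebraMap K _ x) = algebraMap K _ (τ x) :=
    calc f (MvPolynomial.mapEquiv s τ (f.symm (algebraMap K _ x)))
      _ = f (MvPolynomial.C (τ x)) := by
          rw [f.symm.commutes, MvPolynomial.algebraMap_eq, MvPolynomial.mapEquiv_apply,
            MvPolynomial.map_C]; rfl
      _ = algebraMap K _ (τ x) := f.commutes (τ x)
  refine ⟨IsAlgClosure.equivOfEquiv L L e, fun x => ?_⟩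
  have := IsAlgClosure.equivOfEquiv_algebraMap L L e (algebraMap K _ x)
  rwa [he] at this

theorem exists_ringEquiv_apply_eq_of_minpoly_eq {F L : Type*} [Field F] [Field L] [Algebra F L]
    [IsAlgClosed L] {x y : L} (hx : IsIntegral F x) (hxy : minpoly F x = minpoly F y) :
    ∃ σ : L ≃+* L, σ x = y := by
  have hy : IsIntegral F y := by
    rwa [← minpoly.ne_zero_iff, ← hxy, minpoly.ne_zero_iff]
  let E := algebraicClosure F L
  have : Normal F E := IsAlgClosure.normal F E
  let x' : E := ⟨x, mem_algebraicClosure_iff'.2 hx⟩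
  let y' : E := ⟨y, mem_algebraicClosure_iff'.2 hy⟩
  have hxy' : minpoly F x' = minpoly F y' := by
    rwa [← minpoly.algebraMap_eq (algebraMap E L).injective,
      ← minpoly.algebraMap_eq (algebraMap E L).injective y']
  obtain ⟨τ, hτ⟩ := (Normal.minpoly_eq_iff_mem_orbit E).1 hxy'.symm
  obtain ⟨σ, hσ⟩ := exists_ringEquiv_extends (L := L) τ.toRingEquiv
  exact ⟨σ, (hσ x').trans (congrArg _ hτ)⟩

theorem exists_ringEquiv_apply_eq_of_isPrimitiveRoot {L : Type*} [Field L] [CharZero L]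
    [IsAlgClosed L] {n : ℕ} [NeZero n] {ζ ξ : L} (hζ : IsPrimitiveRoot ζ n)
    (hξ : IsPrimitiveRoot ξ n) : ∃ σ : L ≃+* L, σ ζ = ξ :=
  exists_ringEquiv_apply_eq_of_minpoly_eq (F := ℚ) (hζ.isIntegral (NeZero.pos n)).tower_top <| by
    rw [← Polynomial.cyclotomic_eq_minpoly_rat hζ (NeZero.pos n),
      ← Polynomial.cyclotomic_eq_minpoly_rat hξ (NeZero.pos n)]

end Automorphisms

/-! ### Irreducible representations -/

section Irreducible

variable {k G H V W : Type*} [Field k] [Monoid G] [Monoid H] [AddCommGroup V] [Module k V]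
  [AddCommGroup W] [Module k W] {ρ : Representation k G V} {σ : Representation k G W}

theorem isIrreducible_iff_forall_map_le [Nontrivial V] : ρ.IsIrreducible ↔
    ∀ U : Submodule k V, (∀ g, U.map (ρ g) ≤ U) → U = ⊥ ∨ U = ⊤ := by
  have toSub {U U' : Subrepresentation ρ} : U.toSubmodule = U'.toSubmodule ↔ U = U' :=
    Subrepresentation.toSubmodule_injective.eq_iff
  refine ⟨fun h U hU => ?_, fun h => ?_⟩
  · let U' : Subrepresentation ρ := ⟨U, fun g v hv => hU g (Submodule.mem_map_of_mem hv)⟩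
    exact (eq_bot_or_eq_top U').imp toSub.2 toSub.2
  · have : Nontrivial (Subrepresentation ρ) :=
      ⟨⊥, ⊤, fun h => bot_ne_top (α := Submodule k V) (toSub.2 h)⟩
    refine ⟨fun U => ?_⟩
    refine (h U.toSubmodule fun g => ?_).imp toSub.1 toSub.1
    exact Submodule.map_le_iff_le_comap.2 fun v hv => U.apply_mem_toSubmodule g hv

theorem nontrivial_of_isIrreducible (hρ : ρ.IsIrreducible) : Nontrivial V := by
  by_contra h
  have := not_nontrivial_iff_subsingleton.1 h
  exact bot_ne_top (α := Subrepresentation ρ)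
    (Subrepresentation.toSubmodule_injective (Subsingleton.elim _ _))

theorem eq_top_of_forall_map_le_of_isIrreducible (hρ : ρ.IsIrreducible) {U : Submodule k V}
    (hU : ∀ g, U.map (ρ g) ≤ U) (hne : U ≠ ⊥) : U = ⊤ :=
  have := nontrivial_of_isIrreducible hρ
  (isIrreducible_iff_forall_map_le.1 hρ U hU).resolve_left hne

theorem isIrreducible_of_equiv (φ : ρ.Equiv σ) (hρ : ρ.IsIrreducible) : σ.IsIrreducible := by
  have := nontrivial_of_isIrreducible hρ
  let e : V ≃ₗ[k] W := φ.toLinearEquiv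
  have : Nontrivial W := e.toEquiv.symm.nontrivial
  refine isIrreducible_iff_forall_map_le.2 fun U hU => ?_
  have hcomap : U.comap (e : V →ₗ[k] W) = ⊥ ∨ U.comap (e : V →ₗ[k] W) = ⊤ := by
    refine isIrreducible_iff_forall_map_le.1 hρ _ fun g => ?_
    rintro _ ⟨v, hv, rfl⟩
    have : e (ρ g v) = σ g (e v) := IntertwiningMap.isIntertwining _ _ φ.toIntertwiningMap g v
    simpa [this] using hU g (Submodule.mem_map_of_mem hv)
  refine hcomap.imp (fun h => ?_) fun h => ?_
  all_goals
    rw [← Submodule.map_comap_eq_of_surjective e.surjective U, h]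
    simp

theorem isIrreducible_comp_iff {f : H →* G} (hf : Function.Surjective f) :
    IsIrreducible (ρ.comp f : Representation k H V) ↔ ρ.IsIrreducible :=
  OrderIso.isSimpleOrder_iff
    { toFun := fun U => ⟨U.toSubmodule, hf.forall.2 U.apply_mem_toSubmodule⟩
      invFun := fun U => ⟨U.toSubmodule, fun h => U.apply_mem_toSubmodule (f h)⟩
      left_inv := fun _ => rfl
      right_inv := fun _ => rfl
      map_rel_iff' := Iff.rfl }

theorem isIrrChar_iff {G : Type*} [Group G] {χ : G → ℂ} : IsIrrChar χ ↔
    ∃ (n : ℕ) (ρ : Representation ℂ G (Fin n → ℂ)), ρ.IsIrreducible ∧ ρ.character = χ := by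
  refine exists_congr fun n => exists_congr fun ρ => ⟨?_, ?_⟩
  · rintro ⟨hn, hirr, hχ⟩
    have : NeZero n := ⟨hn.ne'⟩
    exact ⟨isIrreducible_iff_forall_map_le.2 hirr, funext fun g => (hχ g).symm⟩
  · rintro ⟨hirr, rfl⟩
    have := nontrivial_of_isIrreducible hirr
    refine ⟨Nat.pos_of_ne_zero ?_, isIrreducible_iff_forall_map_le.1 hirr, fun g => rfl⟩
    rintro rfl
    exact not_subsingleton (Fin 0 → ℂ) inferInstance

theorem exists_equiv_fin [FiniteDimensional k V] (ρ : Representation k G V) :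
    ∃ σ : Representation k G (Fin (finrank k V) → k), Nonempty (ρ.Equiv σ) := by
  let e := (finBasis k V).equivFun
  let σ : Representation k G (Fin (finrank k V) → k) := (e.conjRingEquiv : _ →* _).comp ρ
  exact ⟨σ, ⟨.mk e fun g => LinearMap.ext fun v => by simp [σ]⟩⟩

theorem isIrrChar_character {G : Type*} [Group G] [Module ℂ V] [FiniteDimensional ℂ V]
    {ρ : Representation ℂ G V} (hρ : ρ.IsIrreducible) : IsIrrChar ρ.character := by
  obtain ⟨σ, ⟨φ⟩⟩ := exists_equiv_fin ρ
  exact isIrrChar_iff.2 ⟨_, σ, isIrreducible_of_equiv φ hρ, (char_iso φ).symm⟩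

end Irreducible

/-! ### Finite groups -/

theorem mem_zpowers_of_orderOf_dvd {C : Type*} [Group C] [Finite C] [IsCyclic C] {x y : C}
    (h : orderOf x ∣ orderOf y) : x ∈ Subgroup.zpowers y := by
  classical
  have := Fintype.ofFinite C
  let S : Finset C := {a | a ^ orderOf y = 1}
  have hsub : (Subgroup.zpowers y : Set C).toFinset ⊆ S := fun a ha =>
    Finset.mem_filter_univ _ |>.2 <|
      orderOf_dvd_iff_pow_eq_one.1 (orderOf_dvd_of_mem_zpowers (Set.mem_toFinset.1 ha))
  have hcard : S.card ≤ (Subgroup.zpowers y : Set C).toFinset.card := by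
    rw [Set.toFinset_card, ← Nat.card_eq_fintype_card, SetLike.coe_sort_coe, Nat.card_zpowers]
    exact IsCyclic.card_pow_eq_one_le (orderOf_pos y)
  have hx : x ∈ S := (Finset.mem_filter_univ x).2 (orderOf_dvd_iff_pow_eq_one.1 h)
  rw [← Finset.eq_of_subset_of_card_le hsub hcard] at hx
  exact Set.mem_toFinset.1 hx

section Commutator

variable {G : Type*} [Group G]

theorem normal_of_le_center {A : Subgroup G} (hA : A ≤ Subgroup.center G) : A.Normal :=
  ⟨fun a ha g => by rwa [Subgroup.mem_center_iff.1 (hA ha), mul_inv_cancel_right]⟩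

theorem isMulCommutative_of_index_prime {A : Subgroup G} (hA : A ≤ Subgroup.center G)
    (hp : A.index.Prime) : IsMulCommutative G := by
  have := normal_of_le_center hA
  have : Fact A.index.Prime := ⟨hp⟩
  have : IsCyclic (G ⧸ A) := isCyclic_of_prime_card (p := A.index) rfl
  exact MonoidHom.isMulCommutative_of_isCyclic_of_ker_le_center (QuotientGroup.mk' A)
    ((QuotientGroup.ker_mk' A).trans_le hA)

theorem index_centralizer_dvd_card_of_commutatorElement_mem {v : G} {N : Subgroup G}
    (hN : N ≤ Subgroup.center G) (hv : ∀ g, ⁅v, g⁆ ∈ N) :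
    (Subgroup.centralizer {v}).index ∣ Nat.card N := by
  let f : G →* N := MonoidHom.mk' (fun g => ⟨⁅v, g⁆, hv g⟩) fun g h => Subtype.ext <| by
    have hconj : g * ⁅v, h⁆ * g⁻¹ = ⁅v, h⁆ := by
      rw [Subgroup.mem_center_iff.1 (hN (hv h)), mul_inv_cancel_right]
    calc ⁅v, g * h⁆ = ⁅v, g⁆ * (g * ⁅v, h⁆ * g⁻¹) := by
          simp only [commutatorElement_def]; group
      _ = ⁅v, g⁆ * ⁅v, h⁆ := by rw [hconj]
  have hker : f.ker = Subgroup.centralizer {v} := Subgroup.ext fun g => by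
    rw [MonoidHom.mem_ker, Subgroup.mem_centralizer_singleton_iff, eq_comm (a := g * v),
      ← commutatorElement_eq_one_iff_mul_comm]
    exact Subtype.ext_iff
  rw [← hker, Subgroup.index_ker]
  exact Subgroup.card_subgroup_dvd_card f.range

theorem index_centralizer_eq_of_card_eq {p : ℕ} [Fact p.Prime] {v : G} {N : Subgroup G}
    (hN : N ≤ Subgroup.center G) (hcard : Nat.card N = p) (hv : ∀ g, ⁅v, g⁆ ∈ N)
    (hvZ : v ∉ Subgroup.center G) : (Subgroup.centralizer {v}).index = p := by
  have hdvd := index_centralizer_dvd_card_of_commutatorElement_mem hN hv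
  refine ((Nat.dvd_prime Fact.out).1 (hcard ▸ hdvd)).resolve_left fun h => hvZ ?_
  exact Set.singleton_subset_iff.1 <| Subgroup.centralizer_eq_top_iff_subset.1 <|
    Subgroup.index_eq_one.1 h

theorem pow_mem_center_of_forall_commutatorElement {v : G} {n : ℕ}
    (hv : ∀ g : G, ⁅g, v⁆ ∈ Subgroup.center G) (hn : ∀ g : G, ⁅g, v⁆ ^ n = 1) :
    v ^ n ∈ Subgroup.center G := by
  refine Subgroup.mem_center_iff.2 fun g => mul_inv_eq_iff_eq_mul.1 ?_
  calc g * v ^ n * g⁻¹ = (⁅g, v⁆ * v) ^ n := by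
        rw [← conj_pow, commutatorElement_def, inv_mul_cancel_right]
    _ = ⁅g, v⁆ ^ n * v ^ n := Commute.mul_pow (Subgroup.mem_center_iff.1 (hv g) v).symm n
    _ = v ^ n := by rw [hn, one_mul]

theorem card_commutator_quotient_mul_card {N : Subgroup G} [N.Normal] (hN : N ≤ commutator G) :
    Nat.card (commutator (G ⧸ N)) * Nat.card N = Nat.card (commutator G) := by
  have hmap : (commutator G).map (QuotientGroup.mk' N) = commutator (G ⧸ N) := by
    rw [commutator_def, Subgroup.map_commutator, commutator_def, ← MonoidHom.range_eq_map,
      QuotientGroup.range_mk']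
  rw [← hmap, ← Subgroup.relIndex_ker, QuotientGroup.ker_mk', mul_comm,
    ← Subgroup.relIndex_bot_left, ← Subgroup.relIndex_bot_left,
    Subgroup.relIndex_mul_relIndex _ _ _ bot_le hN]

end Commutator

section PGroup

variable {G : Type*} [Group G] [Finite G] {p : ℕ} [Fact p.Prime] {N : Subgroup G} [N.Normal]

theorem exists_mem_inf_center_orderOf_eq (hG : IsPGroup p G) (hN : N ≠ ⊥) :
    ∃ z ∈ N ⊓ Subgroup.center G, orderOf z = p := by
  have hpN : p ∣ Nat.card N :=
    (hG.to_subgroup N).card_eq_or_dvd.resolve_left (mt Subgroup.card_eq_one.1 hN)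
  have hfix : (1 : N) ∈ MulAction.fixedPoints (ConjAct G) N := fun g => smul_one g
  obtain ⟨n, hn, hn1⟩ := (hG.of_equiv ConjAct.toConjAct)
    |>.exists_fixed_point_of_prime_dvd_card_of_fixed_point N hpN hfix
  have hnZ : (n : G) ∈ Subgroup.center G := by
    rw [← SetLike.mem_coe, ← ConjAct.fixedPoints_eq_center]
    exact fun g => congrArg Subtype.val (hn g)
  have hbot : N ⊓ Subgroup.center G ≠ ⊥ := fun h =>
    hn1 (Subtype.ext (Subgroup.mem_bot.1 (h ▸ Subgroup.mem_inf.2 ⟨n.2, hnZ⟩)).symm)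
  obtain ⟨z, hz⟩ := exists_prime_orderOf_dvd_card' p <|
    (hG.to_subgroup (N ⊓ Subgroup.center G)).card_eq_or_dvd.resolve_left
      (mt Subgroup.card_eq_one.1 hbot)
  exact ⟨z, z.2, (Subgroup.orderOf_coe z).trans hz⟩

theorem le_center_of_card_eq (hG : IsPGroup p G) (hN : Nat.card N = p) :
    N ≤ Subgroup.center G := by
  have hbot : N ≠ ⊥ := fun h => (Fact.out : p.Prime).ne_one (hN ▸ Subgroup.card_eq_one.2 h)
  obtain ⟨z, hz, hzp⟩ := exists_mem_inf_center_orderOf_eq hG hbot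
  have hzN : Subgroup.zpowers z = N := Subgroup.eq_of_le_of_card_ge
    (Subgroup.zpowers_le.2 hz.1) (by rw [hN, Nat.card_zpowers, hzp])
  exact hzN ▸ Subgroup.zpowers_le.2 hz.2

theorem exists_notMem_forall_commutatorElement_mem (hG : IsPGroup p G) (hN : N ≠ ⊤) :
    ∃ g ∉ N, ∀ h, ⁅g, h⁆ ∈ N := by
  have : Nontrivial (G ⧸ N) := QuotientGroup.nontrivial_iff.2 hN
  have := (hG.to_quotient N).center_nontrivial
  obtain ⟨⟨x, hx⟩, hx1⟩ := exists_ne (1 : Subgroup.center (G ⧸ N))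
  obtain ⟨g, rfl⟩ := QuotientGroup.mk_surjective x
  refine ⟨g, fun hg => hx1 (Subtype.ext ((QuotientGroup.eq_one_iff g).2 hg)), fun h => ?_⟩
  rw [← QuotientGroup.eq_one_iff, ← QuotientGroup.mk'_apply, map_commutatorElement,
    commutatorElement_eq_one_iff_mul_comm]
  exact (Subgroup.mem_center_iff.1 hx h).symm

theorem commutator_top_lt_of_isPGroup (hG : IsPGroup p G) (hN : N ≠ ⊥) : ⁅N, ⊤⁆ < N := by
  refine lt_of_le_of_ne (Subgroup.commutator_le_left N ⊤) fun h => hN ?_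
  have hle (n : ℕ) : N ≤ (⊤ : Subgroup G).lowerCentralSeries n := by
    induction n with
    | zero => exact le_top
    | succ n ih => exact h ▸ Subgroup.commutator_mono ih le_rfl
  have := hG.isNilpotent
  obtain ⟨n, hn⟩ := Subgroup.nilpotent_iff_lowerCentralSeries.1 this
  exact le_bot_iff.1 (hn ▸ hle n)

theorem commutator_top_le_center_of_card_eq_sq (hG : IsPGroup p G) (hN : Nat.card N = p ^ 2) :
    ⁅N, ⊤⁆ ≤ Subgroup.center G := by
  by_cases hbot : ⁅N, (⊤ : Subgroup G)⁆ = ⊥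
  · exact hbot ▸ bot_le
  have hN' : N ≠ ⊥ := fun h => hbot (by rw [h, Subgroup.commutator_bot_left])
  have hlt := commutator_top_lt_of_isPGroup hG hN'
  obtain ⟨i, hi, hcard⟩ := (Nat.dvd_prime_pow Fact.out).1 (hN ▸ Subgroup.card_dvd_of_le hlt.le)
  have hi0 : i ≠ 0 := fun h => hbot <| Subgroup.card_eq_one.1 (by rw [hcard, h, pow_zero])
  have hi2 : i ≠ 2 := fun h => hlt.ne <|
    Subgroup.eq_of_le_of_card_ge hlt.le (by rw [hcard, h, hN])
  obtain rfl : i = 1 := by omega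
  exact le_center_of_card_eq hG (hcard.trans (pow_one p))

theorem card_inf_center_of_card_eq_sq (hG : IsPGroup p G) (hN : Nat.card N = p ^ 2)
    (hNZ : ¬ N ≤ Subgroup.center G) :
    Nat.card ↥(N ⊓ Subgroup.center G) = p := by
  have hbot : N ≠ ⊥ := fun h => hNZ (h ▸ bot_le)
  obtain ⟨z, hz, hzp⟩ := exists_mem_inf_center_orderOf_eq hG hbot
  refine Nat.dvd_antisymm ?_ (hzp ▸ Subgroup.orderOf_dvd_natCard _ hz)
  obtain ⟨i, hi, hcard⟩ := (Nat.dvd_prime_pow Fact.out).1 (hN ▸ Subgroup.card_dvd_of_le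
    (inf_le_left : N ⊓ Subgroup.center G ≤ N))
  have hi2 : i ≠ 2 := fun h => hNZ <| inf_eq_left.1 <|
    Subgroup.eq_of_le_of_card_ge inf_le_left (by rw [hcard, h, hN])
  exact hcard ▸ pow_dvd_pow p (show i ≤ 1 by omega) |>.trans (pow_one p).dvd

end PGroup

/-! ### The center of a representation -/

section RepCenter

variable {k G V : Type*} [Field k] [Group G] [AddCommGroup V] [Module k V]
  {ρ : Representation k G V}

/-- The center `Z(ρ)` of a representation: the preimage in `G` of the center of `G / ker ρ`. For
irreducible `ρ` over an algebraically closed field, it consists of the elements acting by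
scalars. -/
def repCenter (ρ : Representation k G V) : Subgroup G :=
  Subgroup.upperCentralSeriesStep ρ.ker

theorem mem_repCenter {g : G} : g ∈ repCenter ρ ↔ ∀ h, ρ ⁅g, h⁆ = 1 :=
  Iff.rfl

instance : (repCenter ρ).Normal := by
  rw [repCenter, Subgroup.upperCentralSeriesStep_eq_comap_center]
  infer_instance

theorem center_le_repCenter : Subgroup.center G ≤ repCenter ρ := fun z hz h => by
  rw [commutatorElement_eq_one_iff_mul_comm.2 (Subgroup.mem_center_iff.1 hz h).symm]
  exact one_mem _

theorem map_commutatorElement_eq_one_iff {g h : G} : ρ ⁅g, h⁆ = 1 ↔ Commute (ρ g) (ρ h) := by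
  rw [← asGroupHom_apply, ← asGroupHom_apply, ← asGroupHom_apply, Units.val_eq_one,
    map_commutatorElement, commutatorElement_eq_one_iff_commute, Commute.units_val_iff]

theorem commute_map_of_mem_centralizer_commutator
    (hker : commutator G ⊓ Subgroup.center G ≤ ρ.ker) {a b : G}
    (ha : a ∈ Subgroup.centralizer (commutator G))
    (hb : b ∈ Subgroup.centralizer (commutator G)) : Commute (ρ a) (ρ b) :=
  map_commutatorElement_eq_one_iff.1 <| hker
    ⟨Subgroup.commutator_mem_commutator (Subgroup.mem_top a) (Subgroup.mem_top b),
      commutator_centralizer_commutator_le_center G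
        (Subgroup.commutator_mem_commutator ha hb)⟩

theorem repCenter_eq_center_of_ker_eq_bot (hker : ρ.ker = ⊥) : repCenter ρ = Subgroup.center G := by
  refine le_antisymm (fun g hg => Subgroup.mem_center_iff.2 fun h => ?_) center_le_repCenter
  refine (commutatorElement_eq_one_iff_mul_comm.1 <| Subgroup.mem_bot.1 ?_).symm
  exact hker ▸ mem_repCenter.1 hg h

theorem mem_repCenter_of_eq_smul_one {g : G} {c : k} (hg : ρ g = c • 1) : g ∈ repCenter ρ := by
  refine mem_repCenter.2 fun h => map_commutatorElement_eq_one_iff.2 ?_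
  rw [hg]
  exact (Commute.one_left _).smul_left c

theorem character_eq_zero_of_map_commutatorElement {g h : G} {c : k} (hc : ρ ⁅g, h⁆ = c • 1)
    (hc1 : c ≠ 1) : ρ.character g = 0 := by
  have hfix : ρ.character g = c * ρ.character g :=
    calc ρ.character g = ρ.character (⁅g, h⁆ * (h * g * h⁻¹)) := by
          congr 1; rw [commutatorElement_def]; group
      _ = c * ρ.character (h * g * h⁻¹) := by
          rw [character, map_mul, hc, smul_one_mul, map_smul, smul_eq_mul, character]
      _ = c * ρ.character g := by rw [char_conj]
  have : (1 - c) * ρ.character g = 0 := by rw [sub_mul, one_mul, ← hfix, sub_self]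
  exact (mul_eq_zero.1 this).resolve_left (sub_ne_zero.2 hc1.symm)

theorem pow_finrank_eq_one_of_map_commutatorElement {g h : G} {c : k} (hc : ρ ⁅g, h⁆ = c • 1) :
    c ^ finrank k V = 1 := by
  let δ : G →* k := LinearMap.det.comp ρ
  calc c ^ finrank k V = δ ⁅g, h⁆ := by
        rw [MonoidHom.comp_apply, hc, LinearMap.det_smul, map_one, mul_one]
    _ = δ (g * g⁻¹) * δ (h * h⁻¹) := by simp only [commutatorElement_def, map_mul]; ring
    _ = 1 := by rw [mul_inv_cancel, mul_inv_cancel, map_one, mul_one]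

variable [FiniteDimensional k V]

theorem character_of_eq_smul_one {g : G} {c : k} (hg : ρ g = c • 1) :
    ρ.character g = c * finrank k V := by
  rw [character, hg, map_smul, LinearMap.trace_one, smul_eq_mul]

variable [IsAlgClosed k]

theorem mem_repCenter_iff_exists_eq_smul_one (hρ : ρ.IsIrreducible) {g : G} :
    g ∈ repCenter ρ ↔ ∃ c : k, ρ g = c • 1 := by
  refine ⟨fun hg => ?_, fun ⟨c, hc⟩ => mem_repCenter_of_eq_smul_one hc⟩
  let f : IntertwiningMap ρ ρ := ⟨ρ g, fun h => map_commutatorElement_eq_one_iff.1 (hg h)⟩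
  obtain ⟨c, hc⟩ := IsIrreducible.algebraMap_intertwiningMap_bijective_of_isAlgClosed.2 f
  exact ⟨c, congrArg IntertwiningMap.toLinearMap hc.symm⟩

theorem exists_centralCharacter (hρ : ρ.IsIrreducible) :
    ∃ ω : repCenter ρ →* k, ∀ z : repCenter ρ, ρ z = ω z • 1 := by
  have := nontrivial_of_isIrreducible hρ
  have hbot (z : repCenter ρ) : ρ z ∈ (⊥ : Subalgebra k (End k V)) := by
    obtain ⟨c, hc⟩ := (mem_repCenter_iff_exists_eq_smul_one hρ).1 z.2
    exact hc ▸ Subalgebra.smul_mem _ (one_mem _) c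
  let e := Algebra.botEquiv k (End k V)
  refine ⟨(e : _ →* k).comp ((ρ.comp (repCenter ρ).subtype).codRestrict _ hbot), fun z => ?_⟩
  have hz := e.symm_apply_apply ⟨ρ z, hbot z⟩
  rw [Algebra.botEquiv_symm_apply] at hz
  exact (congrArg Subtype.val hz).symm.trans (Algebra.algebraMap_eq_smul_one _)

theorem exists_forall_mem_repCenter_map_eq_pow [Finite G] (hρ : ρ.IsIrreducible) :
    ∃ v ∈ repCenter ρ, ∀ z ∈ repCenter ρ, ∃ i : ℕ, ρ z = ρ (v ^ i) := by
  obtain ⟨ω, hω⟩ := exists_centralCharacter hρ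
  have : Finite ω.toHomUnits.range := .of_surjective _ ω.toHomUnits.rangeRestrict_surjective
  obtain ⟨⟨_, v, rfl⟩, hv⟩ := IsCyclic.exists_monoid_generator (α := ω.toHomUnits.range)
  refine ⟨v, v.2, fun z hz => ?_⟩
  obtain ⟨i, hi⟩ := hv ⟨_, ⟨z, hz⟩, rfl⟩
  have hωz : ω (v ^ i) = ω ⟨z, hz⟩ := by
    simpa using congrArg (fun u => ((u : kˣ) : k)) (congrArg Subtype.val hi)
  exact ⟨i, (hω ⟨z, hz⟩).trans (hωz ▸ (hω (v ^ i)).symm)⟩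

theorem character_eq_zero_of_notMem_repCenter (hρ : ρ.IsIrreducible)
    (hG : commutator G ≤ repCenter ρ) {g : G} (hg : g ∉ repCenter ρ) : ρ.character g = 0 := by
  obtain ⟨h, hh⟩ := not_forall.1 (mt mem_repCenter.2 hg)
  obtain ⟨c, hc⟩ := (mem_repCenter_iff_exists_eq_smul_one hρ).1 <|
    hG (Subgroup.commutator_mem_commutator (Subgroup.mem_top g) (Subgroup.mem_top h))
  exact character_eq_zero_of_map_commutatorElement hc fun hc1 => hh (by rw [hc, hc1, one_smul])

theorem character_mul_character_inv_of_mem_repCenter (hρ : ρ.IsIrreducible) {z : G}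
    (hz : z ∈ repCenter ρ) : ρ.character z * ρ.character z⁻¹ = (finrank k V : k) ^ 2 := by
  obtain ⟨ω, hω⟩ := exists_centralCharacter hρ
  have hinv : ω ⟨z, hz⟩ * ω ⟨z, hz⟩⁻¹ = 1 := by rw [← map_mul, mul_inv_cancel, map_one]
  calc ρ.character z * ρ.character z⁻¹
    _ = (ω ⟨z, hz⟩ * finrank k V) * (ω ⟨z, hz⟩⁻¹ * finrank k V) := by
      rw [← character_of_eq_smul_one (hω ⟨z, hz⟩), ← character_of_eq_smul_one (hω ⟨z, hz⟩⁻¹)]; rfl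
    _ = (finrank k V : k) ^ 2 := by rw [mul_mul_mul_comm, hinv, one_mul, sq]

theorem finrank_sq_eq_index_repCenter [Finite G] [CharZero k] (hρ : ρ.IsIrreducible)
    (hG : commutator G ≤ repCenter ρ) :
    finrank k V ^ 2 = (repCenter ρ).index := by
  classical
  have := Fintype.ofFinite G
  have hcard : (Nat.card G : k) ≠ 0 := Nat.cast_ne_zero.2 Nat.card_pos.ne'
  have := invertibleOfNonzero hcard
  have hsum : ∑ g, ρ.character g * ρ.character g⁻¹ = Nat.card G := by
    have := char_orthonormal ρ ρ
    rwa [if_pos ⟨.refl ρ⟩, inv_mul_eq_one₀ hcard, eq_comm] at this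
  have hterm (g : G) : ρ.character g * ρ.character g⁻¹ =
      if g ∈ repCenter ρ then (finrank k V : k) ^ 2 else 0 := by
    split_ifs with hg
    · exact character_mul_character_inv_of_mem_repCenter hρ hg
    · rw [character_eq_zero_of_notMem_repCenter hρ hG hg, zero_mul]
  rw [Finset.sum_congr rfl fun g _ => hterm g, ← Finset.sum_filter, Finset.sum_const,
    nsmul_eq_mul] at hsum
  refine Nat.eq_of_mul_eq_mul_left (Nat.card_pos (α := repCenter ρ)) ?_
  rw [Subgroup.card_mul_index, Nat.card_eq_fintype_card (α := repCenter ρ), Fintype.card_subtype]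
  exact_mod_cast hsum

end RepCenter

/-! ### Degrees of irreducible representations -/

section Degree

variable {k G V : Type*} [Field k] [Group G] [AddCommGroup V] [Module k V] [FiniteDimensional k V]
  {ρ : Representation k G V}

theorem exists_subrepresentation_isIrreducible [Nontrivial V] (ρ : Representation k G V) :
    ∃ U : Subrepresentation ρ, U.toRepresentation.IsIrreducible := by
  have : WellFoundedLT (Subrepresentation ρ) :=
    ⟨InvImage.wf Subrepresentation.toSubmodule wellFounded_lt⟩
  have : Nontrivial (Subrepresentation ρ) :=
    ⟨⊥, ⊤, fun h => bot_ne_top (α := Submodule k V) (congrArg Subrepresentation.toSubmodule h)⟩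
  obtain ⟨U, hU⟩ := IsAtomic.exists_atom (Subrepresentation ρ)
  have : Nontrivial U.toSubmodule := Submodule.nontrivial_iff_ne_bot.2 fun h =>
    hU.1 (Subrepresentation.toSubmodule_injective h)
  refine ⟨U, isIrreducible_iff_forall_map_le.2 fun W hW => ?_⟩
  let W' : Subrepresentation ρ := ⟨W.map U.toSubmodule.subtype, by
    rintro g _ ⟨w, hw, rfl⟩
    exact ⟨_, hW g (Submodule.mem_map_of_mem hw), rfl⟩⟩
  have hle : W' ≤ U := Submodule.map_subtype_le _ W
  refine (hU.le_iff.1 hle).imp (fun h => ?_) fun h => ?_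
  · exact Submodule.map_injective_of_injective U.toSubmodule.subtype_injective <|
      (congrArg Subrepresentation.toSubmodule h).trans (Submodule.map_bot _).symm
  · refine Submodule.map_injective_of_injective U.toSubmodule.subtype_injective ?_
    rw [Submodule.map_subtype_top]
    exact congrArg Subrepresentation.toSubmodule h

variable [IsAlgClosed k]

theorem finrank_eq_one_of_forall_commute (hρ : ρ.IsIrreducible)
    (hcomm : ∀ g h, Commute (ρ g) (ρ h)) : finrank k V = 1 := by
  let σ : Representation k (MonoidHom.mrange ρ) V := (MonoidHom.mrange ρ).subtype
  have : IsMulCommutative (MonoidHom.mrange ρ) := by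
    refine ⟨⟨?_⟩⟩
    rintro ⟨_, g, rfl⟩ ⟨_, h, rfl⟩
    exact Subtype.ext (hcomm g h)
  have : σ.IsIrreducible := (isIrreducible_comp_iff ρ.mrangeRestrict_surjective).1 hρ
  exact IsIrreducible.finrank_eq_one_of_isMulCommutative σ

theorem exists_forall_map_mem_span_singleton [Nontrivial V] (hcomm : ∀ g h, Commute (ρ g) (ρ h)) :
    ∃ v : V, v ≠ 0 ∧ ∀ g, ρ g v ∈ Submodule.span k {v} := by
  obtain ⟨U, hU⟩ := exists_subrepresentation_isIrreducible ρ
  have hcomm' (g h : G) : Commute (U.toRepresentation g) (U.toRepresentation h) :=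
    LinearMap.ext fun u => Subtype.ext <| LinearMap.congr_fun (hcomm g h) u
  obtain ⟨v, hv, hspan⟩ := finrank_eq_one_iff'.1 (finrank_eq_one_of_forall_commute hU hcomm')
  refine ⟨v, by simpa using hv, fun g => ?_⟩
  obtain ⟨c, hc⟩ := hspan (U.toRepresentation g v)
  exact Submodule.mem_span_singleton.2 ⟨c, congrArg Subtype.val hc⟩

theorem finrank_le_index_of_forall_commute (hρ : ρ.IsIrreducible) {A : Subgroup G} [A.FiniteIndex]
    (hA : ∀ a ∈ A, ∀ b ∈ A, Commute (ρ a) (ρ b)) : finrank k V ≤ A.index := by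
  have := nontrivial_of_isIrreducible hρ
  obtain ⟨v, hv, hspan⟩ := exists_forall_map_mem_span_singleton
    (ρ := (ρ.comp A.subtype : Representation k A V)) fun a b => hA a a.2 b b.2
  -- The translates of a common eigenvector `v` of `A` span a subspace that is stable under `G`.
  let w (q : G ⧸ A) : V := ρ q.out v
  let W : Submodule k V := Submodule.span k (Set.range w)
  have hw (g : G) : ρ g v ∈ W := by
    obtain ⟨a, ha⟩ := QuotientGroup.mk_out_eq_mul A g
    have hg : g = (g : G ⧸ A).out * (a⁻¹ : A) := by rw [ha]; simp
    obtain ⟨c, hc⟩ := Submodule.mem_span_singleton.1 (hspan a⁻¹)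
    have hgv : ρ g v = c • w g := by
      rw [← (ρ _).map_smul, hc, ← End.mul_apply]
      exact congrArg (ρ · v) hg |>.trans (by rw [map_mul]; rfl)
    exact hgv ▸ W.smul_mem c (Submodule.subset_span ⟨_, rfl⟩)
  have hinv (g : G) : W.map (ρ g) ≤ W := by
    rw [Submodule.map_span, Submodule.span_le]
    rintro _ ⟨_, ⟨q, rfl⟩, rfl⟩
    have := hw (g * q.out)
    rwa [map_mul] at this
  have hbot : W ≠ ⊥ := (Submodule.ne_bot_iff W).2 ⟨v, by simpa using hw 1, hv⟩
  have htop : W = ⊤ := eq_top_of_forall_map_le_of_isIrreducible hρ hinv hbot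
  have := Fintype.ofFinite (G ⧸ A)
  calc finrank k V = finrank k W := by rw [htop, finrank_top]
    _ ≤ Fintype.card (G ⧸ A) := finrank_range_le_card w
    _ = A.index := by rw [← Nat.card_eq_fintype_card, Subgroup.index]

theorem finrank_eq_one_iff_commutator_le_ker (hρ : ρ.IsIrreducible) :
    finrank k V = 1 ↔ commutator G ≤ ρ.ker := by
  refine ⟨fun h1 => Subgroup.commutator_le.2 fun g _ h _ => ?_, fun hker => ?_⟩
  · obtain ⟨c, hc, -⟩ := LinearMap.existsUnique_eq_smul_id_of_finrank_eq_one h1 (ρ g)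
    exact mem_repCenter.1 (mem_repCenter_of_eq_smul_one hc) h
  · refine finrank_eq_one_of_forall_commute hρ fun g h => map_commutatorElement_eq_one_iff.1 ?_
    exact hker (Subgroup.commutator_mem_commutator (Subgroup.mem_top g) (Subgroup.mem_top h))

end Degree

/-! ### Existence of irreducible representations -/

section Existence

variable {k G : Type*} [Field k] [Group G]

theorem ofModule'_apply {M : Type*} [AddCommGroup M] [Module k M] [Module (MonoidAlgebra k G) M]
    [IsScalarTower k (MonoidAlgebra k G) M] (g : G) (x : M) :
    ofModule' (k := k) M g x = MonoidAlgebra.of k G g • x :=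
  rfl

theorem isIrreducible_ofModule' (M : Type*) [AddCommGroup M] [Module k M]
    [Module (MonoidAlgebra k G) M] [IsScalarTower k (MonoidAlgebra k G) M]
    [IsSimpleModule (MonoidAlgebra k G) M] : (ofModule' (k := k) (G := G) M).IsIrreducible := by
  have := IsSimpleModule.nontrivial (MonoidAlgebra k G) M
  refine isIrreducible_iff_forall_map_le.2 fun U hU => ?_
  let N : Submodule (MonoidAlgebra k G) M :=
    { U with
      smul_mem' := fun a x hx => by
        induction a using MonoidAlgebra.induction_on with
        | of g => exact hU g (Submodule.mem_map_of_mem hx)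
        | add a b ha hb => exact add_smul a b x ▸ U.add_mem ha hb
        | smul c a ha => exact smul_assoc c a x ▸ U.smul_mem c ha }
  exact (eq_bot_or_eq_top N).imp (congrArg (Submodule.restrictScalars k))
    (congrArg (Submodule.restrictScalars k))

theorem exists_isIrreducible_map_ne_one [Finite G] [NeZero (Nat.card G : k)] {z : G}
    (hz : z ≠ 1) : ∃ (n : ℕ) (ρ : Representation k G (Fin n → k)), ρ.IsIrreducible ∧ ρ z ≠ 1 := by
  let a : MonoidAlgebra k G := .of k G z - 1
  have ha : a ≠ 0 := sub_ne_zero.2 fun h => hz <| MonoidAlgebra.of_injective h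
  -- By Maschke's theorem the Jacobson radical of `k[G]` is zero.
  obtain ⟨m, hm, ham⟩ : ∃ m : Ideal (MonoidAlgebra k G), IsCoatom m ∧ a ∉ m := by
    have := mt (Submodule.mem_bot (MonoidAlgebra k G)).1 ha
    rw [← IsSemisimpleModule.jacobson_eq_bot (MonoidAlgebra k G), jacobson, Submodule.mem_sInf]
      at this
    simpa only [Set.mem_ofPred_eq, not_forall, exists_prop] using this
  have : IsSimpleModule (MonoidAlgebra k G) (MonoidAlgebra k G ⧸ m) :=
    isSimpleModule_iff_isCoatom.2 hm
  let τ : Representation k G (MonoidAlgebra k G ⧸ m) := ofModule' (MonoidAlgebra k G ⧸ m)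
  have hτz : τ z ≠ 1 := fun h => ham <| (Submodule.Quotient.mk_eq_zero m).1 <| by
    have hz1 := LinearMap.congr_fun h (Submodule.Quotient.mk 1)
    rwa [ofModule'_apply, ← Submodule.Quotient.mk_smul, smul_eq_mul, mul_one, End.one_apply,
      ← sub_eq_zero, ← Submodule.Quotient.mk_sub] at hz1
  obtain ⟨ρ, ⟨φ⟩⟩ := exists_equiv_fin τ
  refine ⟨_, ρ, isIrreducible_of_equiv φ (isIrreducible_ofModule' _), fun h => hτz ?_⟩
  rw [← φ.symm.conj_apply_self z, h]
  exact LinearEquiv.conj_id _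

end Existence

section Twist

variable {k G V : Type*} [Field k] [Group G] [AddCommGroup V] [Module k V]
  {ρ : Representation k G V}

/-- The twist of a representation `ρ` by a linear character `α`, that is, `ρ ⊗ α` realized on the
space of `ρ`. -/
def twist (ρ : Representation k G V) (α : G →* kˣ) : Representation k G V where
  toFun g := (α g : k) • ρ g
  map_one' := by simp only [map_one, Units.val_one, one_smul]
  map_mul' g h := by rw [map_mul, map_mul, Units.val_mul, smul_mul_smul_comm]

theorem character_twist (α : G →* kˣ) (g : G) :
    (twist ρ α).character g = α g * ρ.character g :=
  map_smul (LinearMap.trace k V) (α g : k) (ρ g)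

theorem isIrreducible_twist (hρ : ρ.IsIrreducible) (α : G →* kˣ) : (twist ρ α).IsIrreducible := by
  have := nontrivial_of_isIrreducible hρ
  refine isIrreducible_iff_forall_map_le.2 fun U hU =>
    isIrreducible_iff_forall_map_le.1 hρ U fun g => ?_
  rw [← Submodule.map_smul (ρ g) U _ (α g).ne_zero]
  exact hU g

end Twist

section DvdDegree

variable {k G V : Type*} [Field k] [IsAlgClosed k] [Group G] [Finite G] [AddCommGroup V]
  [Module k V] [FiniteDimensional k V] {ρ : Representation k G V} {p : ℕ} [Fact p.Prime]

theorem dvd_finrank_of_isPGroup (hG : IsPGroup p G) (hρ : ρ.IsIrreducible)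
    (hne : finrank k V ≠ 1) : p ∣ finrank k V := by
  have htop : repCenter ρ ≠ ⊤ := fun h =>
    hne <| (finrank_eq_one_iff_commutator_le_ker hρ).2 <| Subgroup.commutator_le.2 fun g _ h' _ =>
      mem_repCenter.1 (h ▸ Subgroup.mem_top g) h'
  obtain ⟨g, hg, hgZ⟩ := exists_notMem_forall_commutatorElement_mem hG htop
  obtain ⟨h, hh⟩ := not_forall.1 (mt mem_repCenter.2 hg)
  obtain ⟨c, hc⟩ := (mem_repCenter_iff_exists_eq_smul_one hρ).1 (hgZ h)
  have := nontrivial_of_isIrreducible hρ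
  obtain ⟨m, hm⟩ := hG ⁅g, h⁆
  have hcm : c ^ p ^ m = 1 := by
    have : (c ^ p ^ m) • (1 : End k V) = (1 : k) • 1 := by
      rw [← one_pow (M := End k V) (p ^ m), ← smul_pow, ← hc, ← map_pow, hm, map_one, one_pow,
        one_smul]
    exact smul_left_injective k one_ne_zero this
  have hc1 : orderOf c ≠ 1 := fun h1 => hh (by rw [hc, orderOf_eq_one_iff.1 h1, one_smul])
  obtain ⟨j, -, hj⟩ := (Nat.dvd_prime_pow Fact.out).1 (orderOf_dvd_of_pow_eq_one hcm)
  have hj0 : j ≠ 0 := fun h0 => hc1 (by rw [hj, h0, pow_zero])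
  calc p ∣ orderOf c := hj ▸ dvd_pow_self p hj0
    _ ∣ finrank k V := orderOf_dvd_of_pow_eq_one (pow_finrank_eq_one_of_map_commutatorElement hc)

end DvdDegree

/-! ### Faithful representations -/

section Faithful

variable {k G V W : Type*} [Field k] [IsAlgClosed k] [Group G] [AddCommGroup V]
  [Module k V] [FiniteDimensional k V] [AddCommGroup W] [Module k W] [FiniteDimensional k W]
  {ρ : Representation k G V} {σ : Representation k G W} {p : ℕ} [Fact p.Prime]

theorem exists_isPrimitiveRoot_map_eq_smul_one (hρ : ρ.IsIrreducible) (hker : ρ.ker = ⊥) {z : G}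
    (hz : z ∈ Subgroup.center G) : ∃ ζ : k, IsPrimitiveRoot ζ (orderOf z) ∧ ρ z = ζ • 1 := by
  have := nontrivial_of_isIrreducible hρ
  obtain ⟨ζ, hζ⟩ := (mem_repCenter_iff_exists_eq_smul_one hρ).1 (center_le_repCenter hz)
  refine ⟨ζ, ?_, hζ⟩
  have hpow (n : ℕ) : z ^ n = 1 ↔ ζ ^ n = 1 :=
    calc z ^ n = 1 ↔ ρ (z ^ n) = 1 :=
          (map_eq_one_iff ρ ((MonoidHom.ker_eq_bot_iff _).1 hker)).symm
      _ ↔ ζ ^ n • (1 : End k V) = (1 : k) • 1 := by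
          rw [map_pow, hζ, smul_pow, one_pow, one_smul]
      _ ↔ ζ ^ n = 1 := (smul_left_injective k one_ne_zero).eq_iff
  exact orderOf_eq_orderOf_iff.2 hpow ▸ .orderOf ζ

variable [Finite G]

theorem isCyclic_center_of_ker_eq_bot (hρ : ρ.IsIrreducible) (hker : ρ.ker = ⊥) :
    IsCyclic (Subgroup.center G) := by
  obtain ⟨v, hv, hgen⟩ := exists_forall_mem_repCenter_map_eq_pow hρ
  rw [repCenter_eq_center_of_ker_eq_bot hker] at hv hgen
  refine ⟨⟨v, hv⟩, fun ⟨z, hz⟩ => ?_⟩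
  obtain ⟨i, hi⟩ := hgen z hz
  exact ⟨i, Subtype.ext <| by
    simpa using ((MonoidHom.ker_eq_bot_iff _).1 hker hi).symm⟩

theorem ker_eq_bot_of_isCyclic_center (hG : IsPGroup p G) [IsCyclic (Subgroup.center G)]
    (hcard : Nat.card (commutator G) = p) (hρ : ρ.IsIrreducible) (hne : finrank k V ≠ 1) :
    ρ.ker = ⊥ := by
  by_contra hker
  obtain ⟨z, hz, hzp⟩ := exists_mem_inf_center_orderOf_eq hG hker
  refine hne <| (finrank_eq_one_iff_commutator_le_ker hρ).2 fun y hy => ?_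
  have hyz : orderOf y ∣ orderOf z := hzp ▸ hcard ▸ Subgroup.orderOf_dvd_natCard _ hy
  let y' : Subgroup.center G := ⟨y, le_center_of_card_eq hG hcard hy⟩
  obtain ⟨i, hi⟩ := mem_zpowers_of_orderOf_dvd (x := y') (y := ⟨z, hz.2⟩) <| by
    rwa [Subgroup.orderOf_mk, Subgroup.orderOf_mk]
  obtain rfl : z ^ i = y := congrArg Subtype.val hi
  exact zpow_mem (K := ρ.ker) hz.1 i

theorem exists_ringEquiv_character_eq [CharZero k] (hG : commutator G ≤ Subgroup.center G)
    [IsCyclic (Subgroup.center G)] (hρ : ρ.IsIrreducible) (hσ : σ.IsIrreducible)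
    (hρker : ρ.ker = ⊥) (hσker : σ.ker = ⊥) (hdim : finrank k V = finrank k W) :
    ∃ s : k ≃+* k, ∀ g, σ.character g = s (ρ.character g) := by
  obtain ⟨⟨z, hz⟩, hgen⟩ := IsCyclic.exists_monoid_generator (α := Subgroup.center G)
  obtain ⟨ζ, hζ, hρz⟩ := exists_isPrimitiveRoot_map_eq_smul_one hρ hρker hz
  obtain ⟨ξ, hξ, hσz⟩ := exists_isPrimitiveRoot_map_eq_smul_one hσ hσker hz
  have : NeZero (orderOf z) := ⟨(orderOf_pos z).ne'⟩
  obtain ⟨s, hs⟩ := exists_ringEquiv_apply_eq_of_isPrimitiveRoot hζ hξ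
  have hρc := repCenter_eq_center_of_ker_eq_bot hρker
  have hσc := repCenter_eq_center_of_ker_eq_bot hσker
  refine ⟨s, fun g => ?_⟩
  by_cases hg : g ∈ Subgroup.center G
  · obtain ⟨i, hi⟩ := hgen ⟨g, hg⟩
    obtain rfl : z ^ i = g := congrArg Subtype.val hi
    have hρi : ρ (z ^ i) = ζ ^ i • 1 := by rw [map_pow, hρz, smul_pow, one_pow]
    have hσi : σ (z ^ i) = ξ ^ i • 1 := by rw [map_pow, hσz, smul_pow, one_pow]
    rw [character_of_eq_smul_one hρi, character_of_eq_smul_one hσi, map_mul, map_pow, hs,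
      map_natCast, hdim]
  · rw [character_eq_zero_of_notMem_repCenter hρ (hρc ▸ hG) (hρc ▸ hg),
      character_eq_zero_of_notMem_repCenter hσ (hσc ▸ hG) (hσc ▸ hg), map_zero]

end Faithful

/-! ### `GC*`-groups -/

section GCStar

variable {G V W : Type*} [Group G] [AddCommGroup V] [Module ℂ V] [FiniteDimensional ℂ V]
  [AddCommGroup W] [Module ℂ W] [FiniteDimensional ℂ W] {ρ : Representation ℂ G V}
  {σ : Representation ℂ G W}

theorem character_one_ne_one_iff : ρ.character 1 ≠ 1 ↔ finrank ℂ V ≠ 1 := by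
  rw [char_one, Ne, Nat.cast_eq_one]

theorem IsGCStar.of_surjective {H : Type*} [Group H] (hG : IsGCStar G) {f : G →* H}
    (hf : Function.Surjective f) : IsGCStar H := by
  have hinf {χ : H → ℂ} (hχ : IsIrrChar χ) : IsIrrChar (χ ∘ f) := by
    obtain ⟨n, ρ, hρ, rfl⟩ := isIrrChar_iff.1 hχ
    exact isIrrChar_iff.2 ⟨n, ρ.comp f, (isIrreducible_comp_iff hf).2 hρ, rfl⟩
  intro χ ψ hχ hψ hχ1 hψ1 hdeg
  obtain ⟨s, hs⟩ := hG (χ ∘ f) (ψ ∘ f) (hinf hχ) (hinf hψ) (by simpa using hχ1)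
    (by simpa using hψ1) (by simpa using hdeg)
  exact ⟨s, hf.forall.2 hs⟩

theorem IsGCStar.galoisConj (hG : IsGCStar G) (hρ : ρ.IsIrreducible) (hσ : σ.IsIrreducible)
    (hne : finrank ℂ V ≠ 1) (hdim : finrank ℂ V = finrank ℂ W) :
    GaloisConj ρ.character σ.character :=
  hG _ _ (isIrrChar_character hρ) (isIrrChar_character hσ) (character_one_ne_one_iff.2 hne)
    (character_one_ne_one_iff.2 (hdim ▸ hne)) (by rw [char_one, char_one, hdim])

theorem IsGCStar.character_eq_finrank (hG : IsGCStar G) (hρ : ρ.IsIrreducible)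
    (hσ : σ.IsIrreducible) (hne : finrank ℂ V ≠ 1) (hdim : finrank ℂ V = finrank ℂ W) {z : G}
    (hz : ρ z = 1) : σ.character z = finrank ℂ W := by
  obtain ⟨s, hs⟩ := hG.galoisConj hρ hσ hne hdim
  rw [hs, character, hz, LinearMap.trace_one, map_natCast, hdim]

theorem IsGCStar.map_eq_one (hG : IsGCStar G) (hρ : ρ.IsIrreducible)
    (hσ : σ.IsIrreducible) (hne : finrank ℂ V ≠ 1) (hdim : finrank ℂ V = finrank ℂ W) {z : G}
    (hzc : z ∈ Subgroup.center G) (hz : ρ z = 1) : σ z = 1 := by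
  obtain ⟨c, hc⟩ := (mem_repCenter_iff_exists_eq_smul_one hσ).1 (center_le_repCenter hzc)
  have := nontrivial_of_isIrreducible hσ
  have hn : (finrank ℂ W : ℂ) ≠ 0 := Nat.cast_ne_zero.2 finrank_pos.ne'
  have hχ := hG.character_eq_finrank hρ hσ hne hdim hz
  rw [character_of_eq_smul_one hc, mul_eq_right₀ hn] at hχ
  rw [hc, hχ, one_smul]

theorem IsGCStar.ker_le_commutator [Finite G] (hG : IsGCStar G) (hρ : ρ.IsIrreducible)
    (hne : finrank ℂ V ≠ 1) : ρ.ker ≤ commutator G := by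
  intro z hz
  by_contra hzG
  have hzab : (Abelianization.of z : Abelianization G) ≠ 1 := fun h =>
    hzG ((QuotientGroup.eq_one_iff z).1 h)
  obtain ⟨β, hβ⟩ := CommGroup.exists_apply_ne_one_of_hasEnoughRootsOfUnity _ ℂ hzab
  have := nontrivial_of_isIrreducible hρ
  have hn : (finrank ℂ V : ℂ) ≠ 0 := Nat.cast_ne_zero.2 finrank_pos.ne'
  have hχ := hG.character_eq_finrank hρ (isIrreducible_twist hρ (β.comp Abelianization.of)) hne
    rfl hz
  rw [character_twist, character, MonoidHom.mem_ker.1 hz, LinearMap.trace_one, mul_eq_right₀ hn]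
    at hχ
  exact hβ (Units.ext hχ)

theorem exists_isIrreducible_le_ker_finrank_ne_one [Finite G] {N : Subgroup G} [N.Normal]
    (hN : ¬ commutator G ≤ N) : ∃ (n : ℕ) (ρ : Representation ℂ G (Fin n → ℂ)),
      ρ.IsIrreducible ∧ N ≤ ρ.ker ∧ finrank ℂ (Fin n → ℂ) ≠ 1 := by
  obtain ⟨c, hc, hcN⟩ := SetLike.not_le_iff_exists.1 hN
  obtain ⟨n, τ, hτ, hτc⟩ := exists_isIrreducible_map_ne_one (k := ℂ) <|
    mt (QuotientGroup.eq_one_iff c).1 hcN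
  have hirr : IsIrreducible (τ.comp (QuotientGroup.mk' N) : Representation ℂ G (Fin n → ℂ)) :=
    (isIrreducible_comp_iff (QuotientGroup.mk'_surjective N)).2 hτ
  refine ⟨n, τ.comp (QuotientGroup.mk' N), hirr, fun z hz => ?_, fun h1 => hτc ?_⟩
  · rw [MonoidHom.mem_ker, MonoidHom.comp_apply, QuotientGroup.mk'_apply,
      (QuotientGroup.eq_one_iff z).2 hz, map_one]
  · exact (finrank_eq_one_iff_commutator_le_ker hirr).1 h1 hc

theorem IsGCStar.card_ker_dvd_pow [Finite G] {p m : ℕ} [Fact p.Prime] (hG : IsGCStar G)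
    (hcard : Nat.card (commutator G) = p ^ (m + 1)) (hρ : ρ.IsIrreducible)
    (hne : finrank ℂ V ≠ 1) : Nat.card ρ.ker ∣ p ^ m := by
  have hle := hG.ker_le_commutator hρ hne
  obtain ⟨i, hi, hker⟩ := (Nat.dvd_prime_pow Fact.out).1 (hcard ▸ Subgroup.card_dvd_of_le hle)
  have him : i ≠ m + 1 := fun h => hne <| (finrank_eq_one_iff_commutator_le_ker hρ).2 <|
    (Subgroup.eq_of_le_of_card_ge hle (by rw [hcard, hker, h])).ge
  exact hker ▸ pow_dvd_pow p (by omega)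

theorem IsGCStar.isCyclic_center [Finite G] {p : ℕ} [Fact p.Prime] (hG : IsGCStar G)
    (hcard : Nat.card (commutator G) = p) : IsCyclic (Subgroup.center G) := by
  have hbot : ¬ commutator G ≤ ⊥ := fun h =>
    (Fact.out : p.Prime).ne_one (hcard ▸ Subgroup.card_eq_one.2 (le_bot_iff.1 h))
  obtain ⟨n, ρ, hρ, -, hne⟩ := exists_isIrreducible_le_ker_finrank_ne_one hbot
  have hker := hG.card_ker_dvd_pow (m := 0) (by rw [hcard, zero_add, pow_one]) hρ hne
  exact isCyclic_center_of_ker_eq_bot hρ (Subgroup.card_eq_one.1 (Nat.dvd_one.1 hker))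

end GCStar

/-! ### Commutator subgroups of order `p ^ 2` -/

section CommutatorCardSq

theorem eq_of_sq_mul_squarefree_eq {m n e f : ℕ} (he : Squarefree e) (hf : Squarefree f)
    (h : m ^ 2 * e = n ^ 2 * f) : m = n := by
  rcases eq_or_ne m 0 with rfl | hm
  · simpa [hf.ne_zero, eq_comm] using h
  rcases eq_or_ne n 0 with rfl | hn
  · simpa [he.ne_zero] using h
  refine Nat.eq_of_factorization_eq hm hn fun q => ?_
  have hq := congrArg (fun x => x.factorization q) h
  simp only [Nat.factorization_mul (pow_ne_zero 2 hm) he.ne_zero,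
    Nat.factorization_mul (pow_ne_zero 2 hn) hf.ne_zero, Nat.factorization_pow,
    Finsupp.add_apply, Finsupp.smul_apply, smul_eq_mul] at hq
  have heq := he.natFactorization_le_one q
  have hfq := hf.natFactorization_le_one q
  omega

variable {k G V : Type*} [Field k] [IsAlgClosed k] [Group G] [Finite G] [AddCommGroup V]
  [Module k V] [FiniteDimensional k V] {ρ : Representation k G V} {p : ℕ} [Fact p.Prime]

theorem exists_forall_mem_repCenter_eq_pow_mul (hρ : ρ.IsIrreducible) :
    ∃ v ∈ repCenter ρ, ∀ z ∈ repCenter ρ, ∃ i : ℕ, ∃ y ∈ ρ.ker, z = v ^ i * y := by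
  obtain ⟨v, hv, hgen⟩ := exists_forall_mem_repCenter_map_eq_pow hρ
  refine ⟨v, hv, fun z hz => ?_⟩
  obtain ⟨i, hi⟩ := hgen z hz
  refine ⟨i, (v ^ i)⁻¹ * z, ?_, (mul_inv_cancel_left _ z).symm⟩
  rw [MonoidHom.mem_ker, map_mul, hi, ← map_mul, inv_mul_cancel, map_one]

theorem relIndex_center_repCenter_dvd_card_ker (hρ : ρ.IsIrreducible)
    (hker : ρ.ker ≤ Subgroup.center G) :
    (Subgroup.center G).relIndex (repCenter ρ) ∣ Nat.card ρ.ker := by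
  obtain ⟨v, hv, hgen⟩ := exists_forall_mem_repCenter_eq_pow_mul hρ
  have hcomm (g : G) : ⁅g, v⁆ ∈ ρ.ker := by
    rw [← commutatorElement_inv]
    exact inv_mem (mem_repCenter.1 hv g)
  have hpow : v ^ Nat.card ρ.ker ∈ Subgroup.center G :=
    pow_mem_center_of_forall_commutatorElement (fun g => hker (hcomm g)) fun g =>
      orderOf_dvd_iff_pow_eq_one.1 (Subgroup.orderOf_dvd_natCard _ (hcomm g))
  let Z := (Subgroup.center G).subgroupOf (repCenter ρ)
  let v' : repCenter ρ ⧸ Z := QuotientGroup.mk ⟨v, hv⟩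
  have hv' (q : repCenter ρ ⧸ Z) : q ∈ Subgroup.zpowers v' := by
    obtain ⟨⟨z, hz⟩, rfl⟩ := QuotientGroup.mk_surjective q
    obtain ⟨i, y, hy, rfl⟩ := hgen z hz
    refine ⟨i, QuotientGroup.eq.2 ?_⟩
    simpa [Z, Subgroup.mem_subgroupOf] using hker hy
  have hcard : (Subgroup.center G).relIndex (repCenter ρ) = orderOf v' :=
    (orderOf_eq_card_of_forall_mem_zpowers hv').symm
  refine hcard ▸ orderOf_dvd_of_pow_eq_one ((QuotientGroup.eq_one_iff _).2 ?_)
  exact hpow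

theorem exists_mem_repCenter_centralizer_le_centralizer (hρ : ρ.IsIrreducible)
    (hker : ρ.ker ≤ Subgroup.center G) :
    ∃ v ∈ repCenter ρ, Subgroup.centralizer {v} ≤ Subgroup.centralizer (repCenter ρ) := by
  obtain ⟨v, hv, hgen⟩ := exists_forall_mem_repCenter_eq_pow_mul hρ
  refine ⟨v, hv, fun c hc => Subgroup.mem_centralizer_iff.2 fun z hz => ?_⟩
  obtain ⟨i, y, hy, rfl⟩ := hgen z hz
  have hcv : Commute v c := (Subgroup.mem_centralizer_singleton_iff.1 hc).symm
  have hyc : Commute y c := (Subgroup.mem_center_iff.1 (hker hy) c).symm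
  exact (hcv.pow_left i).mul_left hyc

theorem finrank_eq_of_index_eq_of_forall_commute (hG : IsPGroup p G) (hρ : ρ.IsIrreducible)
    (hne : finrank k V ≠ 1) {A : Subgroup G} (hA : A.index = p)
    (hcomm : ∀ a ∈ A, ∀ b ∈ A, Commute (ρ a) (ρ b)) : finrank k V = p := by
  have := nontrivial_of_isIrreducible hρ
  exact le_antisymm (hA ▸ finrank_le_index_of_forall_commute hρ hcomm)
    (Nat.le_of_dvd finrank_pos (dvd_finrank_of_isPGroup hG hρ hne))

theorem exists_isMulCommutative_index_eq_of_isIrreducible [CharZero k] (hG : IsPGroup p G)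
    (hρ : ρ.IsIrreducible) (hne : finrank k V ≠ 1)
    (hker : ρ.ker = commutator G ⊓ Subgroup.center G)
    (hcard : Nat.card ρ.ker = p) (hle : commutator G ≤ repCenter ρ)
    (hG' : ¬ commutator G ≤ Subgroup.center G) :
    ∃ A : Subgroup G, A.index = p ∧ IsMulCommutative A := by
  have hkerZ : ρ.ker ≤ Subgroup.center G := hker.trans_le inf_le_right
  obtain ⟨v, hv, hC⟩ := exists_mem_repCenter_centralizer_le_centralizer hρ hkerZ
  have hvZ : v ∉ Subgroup.center G := fun h => hG' <| hle.trans <|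
    Subgroup.centralizer_eq_top_iff_subset.1 <| top_le_iff.1 <|
      (Subgroup.centralizer_eq_top_iff_subset.2 (Set.singleton_subset_iff.2 h)).ge.trans hC
  have hindex : (Subgroup.centralizer {v}).index = p :=
    index_centralizer_eq_of_card_eq hkerZ hcard (mem_repCenter.1 hv) hvZ
  have hCG' := hC.trans (Subgroup.centralizer_le hle)
  have hdim : finrank k V = p := finrank_eq_of_index_eq_of_forall_commute hG hρ hne hindex
    fun a ha b hb => commute_map_of_mem_centralizer_commutator hker.ge (hCG' ha) (hCG' hb)
  have hZC : repCenter ρ ≤ Subgroup.centralizer {v} := fun z hz =>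
    Subgroup.mem_centralizer_singleton_iff.2 <|
      hC (Subgroup.mem_centralizer_singleton_iff.2 rfl) z hz
  have hrel : (repCenter ρ).relIndex (Subgroup.centralizer {v}) = p := by
    have hmul := Subgroup.relIndex_mul_index hZC
    rw [← finrank_sq_eq_index_repCenter hρ hle, hdim, hindex, sq] at hmul
    exact Nat.eq_of_mul_eq_mul_right (Fact.out : p.Prime).pos hmul
  refine ⟨_, hindex, isMulCommutative_of_index_prime
    (A := (repCenter ρ).subgroupOf (Subgroup.centralizer {v})) (fun z hz => ?_) ?_⟩
  · exact Subgroup.mem_center_iff.2 fun c => Subtype.ext (hC c.2 z hz).symm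
  · exact (congrArg Nat.Prime hrel).mpr Fact.out

end CommutatorCardSq

/-! ### `GC*`-groups of prime power order -/

section GCStarPGroup

variable {G : Type*} [Group G] [Finite G] {p : ℕ} [Fact p.Prime]

theorem IsGCStar.card_commutator_eq_of_forall_finrank_eq (hG : IsPGroup p G) (hGC : IsGCStar G)
    (hna : commutator G ≠ ⊥) {d : ℕ}
    (hd : ∀ (n : ℕ) (ρ : Representation ℂ G (Fin n → ℂ)), ρ.IsIrreducible →
      finrank ℂ (Fin n → ℂ) ≠ 1 → finrank ℂ (Fin n → ℂ) = d) :
    Nat.card (commutator G) = p := by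
  obtain ⟨z, ⟨hzG, hzZ⟩, hzp⟩ := exists_mem_inf_center_orderOf_eq hG hna
  have hle : Subgroup.zpowers z ≤ commutator G := Subgroup.zpowers_le.2 hzG
  have := normal_of_le_center (Subgroup.zpowers_le.2 hzZ)
  suffices hge : commutator G ≤ Subgroup.zpowers z by
    rw [le_antisymm hge hle, Nat.card_zpowers, hzp]
  by_contra hge
  obtain ⟨n, τ, hτ, hτz, hτne⟩ := exists_isIrreducible_le_ker_finrank_ne_one hge
  have hz1 : z ≠ 1 := fun h => (Fact.out : p.Prime).ne_one (by rw [← hzp, h, orderOf_one])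
  obtain ⟨m, ρ, hρ, hρz⟩ := exists_isIrreducible_map_ne_one (k := ℂ) hz1
  have hρne : finrank ℂ (Fin m → ℂ) ≠ 1 := fun h =>
    hρz ((finrank_eq_one_iff_commutator_le_ker hρ).1 h hzG)
  exact hρz <| hGC.map_eq_one hτ hρ hτne ((hd n τ hτ hτne).trans (hd m ρ hρ hρne).symm) hzZ
    (hτz (Subgroup.mem_zpowers z))

theorem IsGCStar.exists_squarefree_finrank_sq_mul_eq {V : Type*} [AddCommGroup V] [Module ℂ V]
    [FiniteDimensional ℂ V] {ρ : Representation ℂ G V} (hGC : IsGCStar G)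
    (hcard : Nat.card (commutator G) = p ^ 2) (hle : commutator G ≤ Subgroup.center G)
    (hρ : ρ.IsIrreducible) (hne : finrank ℂ V ≠ 1) :
    ∃ e, Squarefree e ∧ finrank ℂ V ^ 2 * e = (Subgroup.center G).index := by
  have hker : ρ.ker ≤ Subgroup.center G := (hGC.ker_le_commutator hρ hne).trans hle
  have hdvd : Nat.card ρ.ker ∣ p := pow_one p ▸ hGC.card_ker_dvd_pow (m := 1) hcard hρ hne
  refine ⟨_, (Fact.out : p.Prime).prime.squarefree.squarefree_of_dvd <|
    (relIndex_center_repCenter_dvd_card_ker hρ hker).trans hdvd, ?_⟩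
  rw [finrank_sq_eq_index_repCenter hρ (hle.trans center_le_repCenter), mul_comm,
    Subgroup.relIndex_mul_index center_le_repCenter]

theorem IsGCStar.exists_isMulCommutative_index_eq (hG : IsPGroup p G) (hGC : IsGCStar G)
    (hcard : Nat.card (commutator G) = p ^ 2) (hle : ¬ commutator G ≤ Subgroup.center G) :
    ∃ A : Subgroup G, A.index = p ∧ IsMulCommutative A := by
  have hN : Nat.card ↥(commutator G ⊓ Subgroup.center G) = p :=
    card_inf_center_of_card_eq_sq hG hcard hle
  obtain ⟨n, τ, hτ, hτN, hτne⟩ := exists_isIrreducible_le_ker_finrank_ne_one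
    (N := commutator G ⊓ Subgroup.center G) fun h => hle (h.trans inf_le_right)
  have hdvd := hGC.card_ker_dvd_pow (m := 1) hcard hτ hτne
  have hker : τ.ker = commutator G ⊓ Subgroup.center G := Eq.symm <|
    Subgroup.eq_of_le_of_card_ge hτN <| by
      rw [hN, ← pow_one p]
      exact Nat.le_of_dvd (Nat.pow_pos (Fact.out : p.Prime).pos) hdvd
  refine exists_isMulCommutative_index_eq_of_isIrreducible hG hτ hτne hker (hker ▸ hN)
    (fun c hc h => ?_) hle
  have hch := Subgroup.commutator_mem_commutator hc (Subgroup.mem_top h)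
  exact hτN ⟨Subgroup.commutator_le_left _ _ hch,
    commutator_top_le_center_of_card_eq_sq hG hcard hch⟩

theorem IsGCStar.card_commutator_ne_sq (hG : IsPGroup p G) (hGC : IsGCStar G) :
    Nat.card (commutator G) ≠ p ^ 2 := by
  intro hcard
  have hp : p.Prime := Fact.out
  have hbot : commutator G ≠ ⊥ := fun h =>
    (Nat.one_lt_pow two_ne_zero hp.one_lt).ne' (hcard ▸ Subgroup.card_eq_one.2 h)
  suffices h : Nat.card (commutator G) = p from
    (lt_self_pow₀ hp.one_lt one_lt_two).ne (h.symm.trans hcard)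
  by_cases hle : commutator G ≤ Subgroup.center G
  · obtain ⟨n, τ, hτ, -, hτne⟩ := exists_isIrreducible_le_ker_finrank_ne_one (mt le_bot_iff.1 hbot)
    obtain ⟨e, he, hτe⟩ := hGC.exists_squarefree_finrank_sq_mul_eq hcard hle hτ hτne
    refine hGC.card_commutator_eq_of_forall_finrank_eq hG hbot (d := finrank ℂ (Fin n → ℂ))
      fun m ρ hρ hρne => ?_
    obtain ⟨f, hf, hρf⟩ := hGC.exists_squarefree_finrank_sq_mul_eq hcard hle hρ hρne
    exact eq_of_sq_mul_squarefree_eq hf he (hρf.trans hτe.symm)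
  · obtain ⟨A, hA, hAcomm⟩ := hGC.exists_isMulCommutative_index_eq hG hcard hle
    exact hGC.card_commutator_eq_of_forall_finrank_eq hG hbot fun m ρ hρ hρne =>
      finrank_eq_of_index_eq_of_forall_commute hG hρ hρne hA fun a ha b hb =>
        Commute.map (Subgroup.le_centralizer_iff_isMulCommutative.2 hAcomm hb a ha) ρ

theorem IsGCStar.card_commutator_eq (hG : IsPGroup p G) (hGC : IsGCStar G)
    (hna : commutator G ≠ ⊥) : Nat.card (commutator G) = p := by
  induction hn : Nat.card G using Nat.strong_induction_on generalizing G with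
  | _ n ih =>
    obtain ⟨z, ⟨hzG, hzZ⟩, hzp⟩ := exists_mem_inf_center_orderOf_eq hG hna
    let N := Subgroup.zpowers z
    have hN : Nat.card N = p := (Nat.card_zpowers z).trans hzp
    have : N.Normal := normal_of_le_center (Subgroup.zpowers_le.2 hzZ)
    have hmul := card_commutator_quotient_mul_card (Subgroup.zpowers_le.2 hzG)
    by_cases hbot : commutator (G ⧸ N) = ⊥
    · rwa [Subgroup.card_eq_one.2 hbot, hN, one_mul, eq_comm] at hmul
    have hlt : Nat.card (G ⧸ N) < n := by
      rw [← hn, Subgroup.card_eq_card_quotient_mul_card_subgroup N, hN]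
      exact lt_mul_right Nat.card_pos (Fact.out : p.Prime).one_lt
    have hquot := ih _ hlt (hG.to_quotient N) (hGC.of_surjective (QuotientGroup.mk'_surjective N))
      hbot rfl
    exact (hGC.card_commutator_ne_sq hG (by rw [← hmul, hquot, hN, sq])).elim

theorem isGCStar_of_isCyclic_center (hG : IsPGroup p G) [IsCyclic (Subgroup.center G)]
    (hcard : Nat.card (commutator G) = p) : IsGCStar G := by
  intro χ ψ hχ hψ hχ1 hψ1 hdeg
  obtain ⟨n, ρ, hρ, rfl⟩ := isIrrChar_iff.1 hχ
  obtain ⟨m, σ, hσ, rfl⟩ := isIrrChar_iff.1 hψ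
  rw [character_one_ne_one_iff] at hχ1 hψ1
  rw [char_one, char_one, Nat.cast_inj] at hdeg
  exact exists_ringEquiv_character_eq (le_center_of_card_eq hG hcard) hρ hσ
    (ker_eq_bot_of_isCyclic_center hG hcard hρ hχ1)
    (ker_eq_bot_of_isCyclic_center hG hcard hσ hψ1) hdeg

end GCStarPGroup

/-- A non-abelian finite `p`-group is a `GC*`-group iff its center is cyclic and its
commutator subgroup has order `p`. -/
theorem pgroup_gcstar_iff {P : Type*} [Group P] [Finite P] {p : ℕ} (hp : p.Prime)
    (hP : IsPGroup p P) (hna : ¬ ∀ a b : P, a * b = b * a) :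
    IsGCStar P ↔ (IsCyclic (Subgroup.center P) ∧ Nat.card (commutator P) = p) := by
  have : Fact p.Prime := ⟨hp⟩
  have hne : commutator P ≠ ⊥ := fun h => hna ((commutator_eq_bot_iff P).1 h).is_comm.comm
  refine ⟨fun hGC => ?_, fun ⟨_, hcard⟩ => isGCStar_of_isCyclic_center hP hcard⟩
  have hcard := hGC.card_commutator_eq hP hne
  exact ⟨hGC.isCyclic_center hcard, hcard⟩
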